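/- For all x, y ∈ ℝ, lim_{n→∞} [P(|X| ≤ a_n·x + b_n + a_n·ln 2, ρ_n|X| + √(1-ρ_n²)·Y ≤ a_n·y + b_n + a_n·ln 2)]^n = H_λ(x, y), where H_λ(x,y) = exp(-Φ(λ + (x-y)/(2λ))·e^{-y} - Φ(λ + (y-x)/(2λ))·e^{-x}). -/

import Mathlib

open MeasureTheory Filter Real Set ProbabilityTheory Topology

noncomputable def stdNormalCDF (t : ℝ) : ℝ :=
  (Real.sqrt (2 * Real.pi))⁻¹ * ∫ s in Set.Iic t, Real.exp (-(s ^ 2) / 2)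

noncomputable def npdf (s : ℝ) : ℝ := (Real.sqrt (2 * Real.pi))⁻¹ * Real.exp (-(s ^ 2) / 2)

lemma npdf_eq (s : ℝ) : gaussianPDFReal 0 1 s = npdf s := by
  simp [gaussianPDFReal, npdf]

lemma npdf_eq' : gaussianPDFReal 0 1 = npdf := funext npdf_eq

lemma npdf_pos (s : ℝ) : 0 < npdf s := by
  unfold npdf; positivity

lemma npdf_cont : Continuous npdf := by
  unfold npdf; fun_prop

lemma npdf_integrable : Integrable npdf := by
  rw [← npdf_eq']; exact integrable_gaussianPDFReal 0 1

lemma cdf_int (z : ℝ) : stdNormalCDF z = ∫ s in Iic z, npdf s := by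
  unfold stdNormalCDF npdf
  rw [integral_const_mul]

lemma cdf_real (z : ℝ) : (gaussianReal 0 1).real (Iic z) = stdNormalCDF z := by
  rw [Measure.real, gaussianReal_apply_eq_integral _ one_ne_zero, npdf_eq', ← cdf_int,
    ENNReal.toReal_ofReal]
  rw [cdf_int]
  exact integral_nonneg fun s => (npdf_pos s).le

lemma cdf_tail (z : ℝ) : (gaussianReal 0 1).real (Ioi z) = 1 - stdNormalCDF z := by
  rw [← cdf_real, ← probReal_compl_eq_one_sub measurableSet_Iic, compl_Iic]

lemma cdf_eq_cdf : (cdf (gaussianReal 0 1) : ℝ → ℝ) = stdNormalCDF := by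
  ext z; rw [cdf_eq_real, cdf_real]

lemma cdf_top : Tendsto stdNormalCDF atTop (𝓝 1) := by
  rw [← cdf_eq_cdf]; exact tendsto_cdf_atTop _

lemma cdf_bot : Tendsto stdNormalCDF atBot (𝓝 0) := by
  rw [← cdf_eq_cdf]; exact tendsto_cdf_atBot _

lemma cdf_mono' : Monotone stdNormalCDF := by
  rw [← cdf_eq_cdf]; exact monotone_cdf _

lemma cdf_deriv (z : ℝ) : HasDerivAt stdNormalCDF (npdf z) z := by
  have h : stdNormalCDF = fun z => stdNormalCDF 0 + ∫ s in (0:ℝ)..z, npdf s := by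
    ext w
    rw [← intervalIntegral.integral_Iic_sub_Iic npdf_integrable.integrableOn
      npdf_integrable.integrableOn, cdf_int w, cdf_int 0]
    ring
  rw [h]
  exact (intervalIntegral.integral_hasDerivAt_right (npdf_cont.intervalIntegrable _ _)
    (npdf_cont.stronglyMeasurableAtFilter _ _) npdf_cont.continuousAt).const_add _

lemma cdf_cont : Continuous stdNormalCDF :=
  continuous_iff_continuousAt.2 fun z => (cdf_deriv z).continuousAt

lemma tail_nonneg (z : ℝ) : 0 ≤ 1 - stdNormalCDF z := by
  rw [← cdf_tail]; exact measureReal_nonneg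

lemma cdf_nonneg' (z : ℝ) : 0 ≤ stdNormalCDF z := by
  rw [← cdf_real]; exact measureReal_nonneg

lemma chernoff (K z : ℝ) (hK : 0 ≤ K) :
    1 - stdNormalCDF z ≤ Real.exp (K ^ 2 / 2 - K * z) := by
  rw [← cdf_tail]
  have h := measure_ge_le_exp_mul_mgf (X := fun x : ℝ => x) (μ := gaussianReal 0 1) z hK
    (integrable_exp_mul_gaussianReal K)
  rw [mgf_gaussianReal (μ := 0) (v := 1) (by simp)] at h
  refine (measureReal_mono ?_).trans (h.trans_eq ?_)
  · intro s hs; exact le_of_lt (show z < s from hs)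
  · rw [← Real.exp_add]; congr 1; simp; ring

lemma cdf_symm (z : ℝ) : stdNormalCDF (-z) = 1 - stdNormalCDF z := by
  rw [← cdf_tail, Measure.real, gaussianReal_apply_eq_integral _ one_ne_zero, npdf_eq',
    ENNReal.toReal_ofReal (integral_nonneg fun s => (npdf_pos s).le), cdf_int]
  rw [← integral_comp_neg_Ioi]
  simp [npdf]

lemma npdf_deriv (z : ℝ) : HasDerivAt npdf (-z * npdf z) z := by
  unfold npdf
  have h1 : HasDerivAt (fun s : ℝ => -(s ^ 2) / 2) (-z) z := by
    have := ((hasDerivAt_pow 2 z).neg).div_const 2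
    exact this.congr_deriv (by simp; ring)
  exact ((h1.exp).const_mul ((Real.sqrt (2 * Real.pi))⁻¹)).congr_deriv (by ring)

lemma npdf_top : Tendsto npdf atTop (𝓝 0) := by
  unfold npdf
  have h : Tendsto (fun s : ℝ => -(s ^ 2) / 2) atTop atBot := by
    have : Tendsto (fun s : ℝ => s ^ 2 / 2) atTop atTop :=
      (tendsto_pow_atTop two_ne_zero).atTop_div_const two_pos
    refine (tendsto_neg_atTop_atBot.comp this).congr fun s => ?_
    simp [neg_div]
  simpa using (Real.tendsto_exp_atBot.comp h).const_mul ((Real.sqrt (2 * Real.pi))⁻¹)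

lemma mills : Tendsto (fun z => (1 - stdNormalCDF z) / (npdf z / z)) atTop (𝓝 1) := by
  refine HasDerivAt.lhopital_zero_atTop (f' := fun z => - npdf z)
    (g' := fun z => (-z * npdf z * z - npdf z * 1) / z ^ 2) ?_ ?_ ?_ ?_ ?_ ?_
  · exact Eventually.of_forall fun z => (cdf_deriv z).const_sub 1
  · filter_upwards [eventually_gt_atTop 0] with z hz
    exact (npdf_deriv z).div (hasDerivAt_id z) hz.ne'
  · filter_upwards [eventually_gt_atTop 0] with z hz
    have := npdf_pos z
    apply ne_of_lt
    apply div_neg_of_neg_of_pos _ (by positivity)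
    nlinarith [mul_pos (mul_pos hz this) hz]
  · simpa using cdf_top.const_sub 1
  · simpa using npdf_top.div_atTop tendsto_id
  · have : Tendsto (fun z : ℝ => 1 / (1 + 1 / z ^ 2)) atTop (𝓝 (1 / (1 + 0))) := by
      refine tendsto_const_nhds.div (tendsto_const_nhds.add ?_) (by norm_num)
      exact tendsto_const_nhds.div_atTop (tendsto_pow_atTop two_ne_zero)
    rw [show (1:ℝ) / (1 + 0) = 1 by norm_num] at this
    refine this.congr' ?_
    filter_upwards [eventually_gt_atTop 0] with z hz
    have := npdf_pos z
    have h2 : -z * npdf z * z - npdf z * 1 = -(npdf z * (z ^ 2 + 1)) := by ring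
    rw [h2]
    field_simp

lemma limit_integrable (lam : ℝ) (hlam : 0 < lam) (x y : ℝ) :
    IntegrableOn (fun t => Real.exp (-t) * (1 - stdNormalCDF (lam + (y - t) / (2 * lam)))) (Iic x) := by
  have hE := (integrableOn_exp_Iic x).const_mul (Real.exp (4 * lam ^ 2 - 2 * y))
  refine hE.mono' ?_ ?_
  · have := cdf_cont
    exact Continuous.aestronglyMeasurable (by fun_prop)
  · refine Eventually.of_forall fun t => ?_
    rw [Real.norm_of_nonneg (mul_nonneg (Real.exp_pos _).le (tail_nonneg _))]
    refine (mul_le_mul_of_nonneg_left (chernoff (4 * lam) _ (by positivity)) (Real.exp_pos _).le).trans_eq ?_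
    rw [← Real.exp_add, ← Real.exp_add]
    congr 1; field_simp; ring

lemma limit_value (lam : ℝ) (hlam : 0 < lam) (x y : ℝ) :
    ∫ t in Iic x, Real.exp (-t) * (1 - stdNormalCDF (lam + (y - t) / (2 * lam))) =
      (stdNormalCDF (lam + (x - y) / (2 * lam)) * Real.exp (-y) +
          stdNormalCDF (lam + (y - x) / (2 * lam)) * Real.exp (-x)) - Real.exp (-x) := by
  set F : ℝ → ℝ := fun x => stdNormalCDF (lam + (x - y) / (2 * lam)) * Real.exp (-y) -
    Real.exp (-x) * (1 - stdNormalCDF (lam + (y - x) / (2 * lam))) with hF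
  have hd : ∀ t, HasDerivAt F (Real.exp (-t) * (1 - stdNormalCDF (lam + (y - t) / (2 * lam)))) t := by
    intro t
    have i1 : HasDerivAt (fun x : ℝ => lam + (x - y) / (2 * lam)) (1 / (2 * lam)) t :=
      (((hasDerivAt_id t).sub_const y).div_const _).const_add _
    have i2 : HasDerivAt (fun x : ℝ => lam + (y - x) / (2 * lam)) (-1 / (2 * lam)) t :=
      (((hasDerivAt_id t).const_sub y).div_const _).const_add _
    have i3 : HasDerivAt (fun x : ℝ => Real.exp (-x)) (Real.exp (-t) * (-1)) t :=
      ((hasDerivAt_id t).neg).exp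
    have j1 := ((cdf_deriv _).comp t i1).mul_const (Real.exp (-y))
    have j2 := i3.mul (((cdf_deriv _).comp t i2).const_sub 1)
    have key : npdf (lam + (t - y) / (2 * lam)) * Real.exp (-y) =
        npdf (lam + (y - t) / (2 * lam)) * Real.exp (-t) := by
      unfold npdf
      rw [mul_assoc, mul_assoc, ← Real.exp_add, ← Real.exp_add]
      congr 2
      field_simp; ring
    refine (j1.sub j2).congr_deriv ?_
    simp only [Function.comp]
    linear_combination (1 / (2 * lam)) * key
  have hbot : Tendsto F atBot (𝓝 0) := by
    have k1 : Tendsto (fun x : ℝ => lam + (x - y) / (2 * lam)) atBot atBot := by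
      refine tendsto_atBot_add_const_left _ _ ?_
      refine Tendsto.atBot_div_const (by positivity) ?_
      exact tendsto_atBot_add_const_right _ _ tendsto_id
    have k2 : Tendsto (fun t => Real.exp (-t) * (1 - stdNormalCDF (lam + (y - t) / (2 * lam))))
        atBot (𝓝 0) := by
      have hE := (Real.tendsto_exp_atBot).const_mul (Real.exp (4 * lam ^ 2 - 2 * y))
      rw [mul_zero] at hE
      refine squeeze_zero (fun t => mul_nonneg (Real.exp_pos _).le (tail_nonneg _)) (fun t => ?_) hE
      refine (mul_le_mul_of_nonneg_left (chernoff (4 * lam) _ (by positivity)) (Real.exp_pos _).le).trans_eq ?_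
      rw [← Real.exp_add, ← Real.exp_add]
      congr 1; field_simp; ring
    have := ((cdf_bot.comp k1).mul_const (Real.exp (-y))).sub k2
    simpa [hF] using this
  rw [integral_Iic_of_hasDerivAt_of_tendsto (hd x).continuousAt.continuousWithinAt
    (fun t _ => hd t) (limit_integrable lam hlam x y) hbot]
  simp only [hF]; ring

lemma cdf_lt_one (M : ℝ) : stdNormalCDF M < 1 := by
  have h : StrictMono stdNormalCDF := strictMono_of_deriv_pos fun z => by
    rw [(cdf_deriv z).deriv]; exact npdf_pos z
  have h1 := h (lt_add_one M)
  linarith [tail_nonneg (M + 1)]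

lemma b_top (b : ℕ → ℝ) (hb : ∀ n : ℕ, 2 ≤ n → stdNormalCDF (b n) = 1 - 1 / (n : ℝ)) :
    Tendsto b atTop atTop := by
  rw [tendsto_atTop]
  intro M
  have h1 : ∀ᶠ n : ℕ in atTop, 1 / (n : ℝ) < 1 - stdNormalCDF M :=
    (tendsto_one_div_atTop_nhds_zero_nat).eventually_lt_const (by linarith [cdf_lt_one M])
  filter_upwards [h1, eventually_ge_atTop 2] with n hn h2
  by_contra hc
  have := cdf_mono' (not_le.1 hc).le
  rw [hb n h2] at this
  linarith

lemma ratio_lim (b : ℕ → ℝ) (hb : ∀ n : ℕ, 2 ≤ n → stdNormalCDF (b n) = 1 - 1 / (n : ℝ)) :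
    Tendsto (fun n : ℕ => (n : ℝ) * npdf (b n) / b n) atTop (𝓝 1) := by
  have h := (mills.comp (b_top b hb)).inv₀ one_ne_zero
  rw [inv_one] at h
  refine h.congr' ?_
  filter_upwards [eventually_ge_atTop 2] with n h2
  have : (0:ℝ) < n := by positivity
  simp only [Function.comp, hb n h2]
  rw [sub_sub_cancel, inv_div]
  field_simp

lemma ab_lim (a b : ℕ → ℝ)
    (ha : ∀ n : ℕ, a n = 1 / Real.sqrt (2 * Real.log n))
    (hb : ∀ n : ℕ, 2 ≤ n → stdNormalCDF (b n) = 1 - 1 / (n : ℝ)) :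
    Tendsto (fun n => a n * b n) atTop (𝓝 1) := by
  have hbt := b_top b hb
  have hr := ratio_lim b hb
  have hlog := ((Real.continuousAt_log one_ne_zero).tendsto.comp hr)
  rw [Real.log_one] at hlog
  have hb2 : Tendsto (fun n => b n ^ 2) atTop atTop := (tendsto_pow_atTop two_ne_zero).comp hbt
  have hlb : Tendsto (fun n => Real.log (b n) / b n ^ 2) atTop (𝓝 0) := by
    have h1 : Tendsto (fun z : ℝ => Real.log z / z) atTop (𝓝 0) := by
      simpa using Real.isLittleO_log_id_atTop.tendsto_div_nhds_zero
    have h2 := (h1.mul tendsto_inv_atTop_zero).comp hbt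
    rw [mul_zero] at h2
    refine h2.congr fun n => ?_
    simp only [Function.comp]
    rw [pow_two, div_mul_eq_div_div, div_eq_mul_inv (Real.log (b n) / b n)]
  have hc : Tendsto (fun n : ℕ => (Real.log ((n : ℝ) * npdf (b n) / b n)
      + Real.log (Real.sqrt (2 * Real.pi))) / b n ^ 2) atTop (𝓝 0) :=
    (hlog.add_const _).div_atTop hb2
  have h1 : Tendsto (fun n : ℕ => 2 * Real.log n / b n ^ 2) atTop (𝓝 1) := by
    have := ((hc.add hlb).const_mul 2).const_add 1
    rw [add_zero, mul_zero, add_zero] at this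
    refine this.congr' ?_
    filter_upwards [eventually_ge_atTop 2, hbt.eventually_gt_atTop 0] with n h2 hbp
    have hn : (0:ℝ) < n := by positivity
    have hpi : 0 < Real.sqrt (2 * Real.pi) := by positivity
    rw [Real.log_div (by have := npdf_pos (b n); positivity) hbp.ne',
      Real.log_mul hn.ne' (npdf_pos _).ne']
    unfold npdf
    rw [Real.log_mul (by positivity) (by positivity), Real.log_inv, Real.log_exp]
    field_simp
    ring
  have h2 := (h1.inv₀ one_ne_zero).sqrt
  rw [inv_one, Real.sqrt_one] at h2
  refine h2.congr' ?_
  filter_upwards [eventually_ge_atTop 2, hbt.eventually_gt_atTop 0] with n h2 hbp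
  rw [ha, inv_div, Real.sqrt_div (by positivity), Real.sqrt_sq hbp.le]
  ring

lemma c_lim (a b : ℕ → ℝ)
    (ha : ∀ n : ℕ, a n = 1 / Real.sqrt (2 * Real.log n))
    (hb : ∀ n : ℕ, 2 ≤ n → stdNormalCDF (b n) = 1 - 1 / (n : ℝ)) :
    Tendsto (fun n : ℕ => n * a n * npdf (b n)) atTop (𝓝 1) := by
  have h := (ratio_lim b hb).mul (ab_lim a b ha hb)
  rw [one_mul] at h
  refine h.congr' ?_
  filter_upwards [(b_top b hb).eventually_gt_atTop 0] with n hbp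
  field_simp

lemma logn_top : Tendsto (fun n : ℕ => Real.log n) atTop atTop :=
  Real.tendsto_log_atTop.comp tendsto_natCast_atTop_atTop

lemma a_lim (a : ℕ → ℝ) (ha : ∀ n : ℕ, a n = 1 / Real.sqrt (2 * Real.log n)) :
    Tendsto a atTop (𝓝 0) := by
  rw [funext ha]
  refine tendsto_const_nhds.div_atTop (Real.tendsto_sqrt_atTop.comp ?_)
  exact logn_top.const_mul_atTop two_pos

lemma a_pos (a : ℕ → ℝ) (ha : ∀ n : ℕ, a n = 1 / Real.sqrt (2 * Real.log n)) :
    ∀ᶠ n in atTop, 0 < a n := by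
  filter_upwards [logn_top.eventually_gt_atTop 0] with n hn
  rw [ha]; positivity

lemma rho_lim (ρ : ℕ → ℝ) (L : ℝ)
    (hHR : Tendsto (fun n : ℕ => (1 - ρ n) * Real.log n) atTop (𝓝 L)) :
    Tendsto ρ atTop (𝓝 1) := by
  have h := (hHR.div_atTop logn_top).const_sub 1
  rw [sub_zero] at h
  refine h.congr' ?_
  filter_upwards [logn_top.eventually_gt_atTop 0] with n hn
  field_simp
  ring

lemma B_lim (a : ℕ → ℝ) (ha : ∀ n : ℕ, a n = 1 / Real.sqrt (2 * Real.log n))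
    (ρ : ℕ → ℝ) (hρ : ∀ n, ρ n ∈ Ioc (0 : ℝ) 1) (lam : ℝ) (hlam : 0 < lam)
    (hHR : Tendsto (fun n : ℕ => (1 - ρ n) * Real.log n) atTop (𝓝 (lam ^ 2))) :
    Tendsto (fun n => a n / Real.sqrt (1 - ρ n ^ 2)) atTop (𝓝 (1 / (2 * lam))) := by
  have h := ((((rho_lim ρ _ hHR).const_add 1).mul hHR).const_mul 2).sqrt.inv₀ (by
    have : 0 < 2 * ((1 + 1) * lam ^ 2) := by positivity
    positivity)
  have e : Real.sqrt (2 * ((1 + 1) * lam ^ 2)) = 2 * lam := by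
    rw [show 2 * ((1 + 1) * lam ^ 2) = (2 * lam) ^ 2 by ring]
    exact Real.sqrt_sq (by positivity)
  rw [e, ← one_div] at h
  refine h.congr' ?_
  filter_upwards [logn_top.eventually_gt_atTop 0] with n hn
  rw [ha, show 2 * ((1 + ρ n) * ((1 - ρ n) * Real.log n)) = (2 * Real.log n) * (1 - ρ n ^ 2) by ring,
    Real.sqrt_mul (by positivity)]
  rw [mul_inv, div_eq_mul_inv, one_div]

lemma A_lim (a b : ℕ → ℝ) (ha : ∀ n : ℕ, a n = 1 / Real.sqrt (2 * Real.log n))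
    (hb : ∀ n : ℕ, 2 ≤ n → stdNormalCDF (b n) = 1 - 1 / (n : ℝ))
    (ρ : ℕ → ℝ) (hρ : ∀ n, ρ n ∈ Ioc (0 : ℝ) 1) (lam : ℝ) (hlam : 0 < lam)
    (hHR : Tendsto (fun n : ℕ => (1 - ρ n) * Real.log n) atTop (𝓝 (lam ^ 2))) :
    Tendsto (fun n => (b n + a n * Real.log 2) * (1 - ρ n) / Real.sqrt (1 - ρ n ^ 2))
      atTop (𝓝 lam) := by
  have h1 := ((ab_lim a b ha hb).add (((a_lim a ha).pow 2).mul_const (Real.log 2)))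
  have h2 := (h1.mul (hHR.const_mul 2)).mul (B_lim a ha ρ hρ lam hlam hHR)
  have e : (1 + 0 ^ 2 * Real.log 2) * (2 * lam ^ 2) * (1 / (2 * lam)) = lam := by
    field_simp; ring
  rw [e] at h2
  refine h2.congr' ?_
  filter_upwards [logn_top.eventually_gt_atTop 0, a_pos a ha] with n hn hap
  have e2 : a n ^ 2 * (2 * Real.log n) = 1 := by
    rw [ha, div_pow, Real.sq_sqrt (by positivity)]; field_simp
  linear_combination ((b n + a n * Real.log 2) * (1 - ρ n) / Real.sqrt (1 - ρ n ^ 2)) * e2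

lemma npdf_shift (b a p : ℝ) :
    npdf (b + a * p) = npdf b * Real.exp (-(a * b * p) - (a * p) ^ 2 / 2) := by
  unfold npdf
  rw [mul_assoc, ← Real.exp_add]
  congr 2; ring

lemma sigma_pos (ρ : ℕ → ℝ) (hρ : ∀ n, ρ n ∈ Ioc (0 : ℝ) 1) (lam : ℝ) (hlam : 0 < lam)
    (hHR : Tendsto (fun n : ℕ => (1 - ρ n) * Real.log n) atTop (𝓝 (lam ^ 2))) :
    ∀ᶠ n in atTop, 0 < Real.sqrt (1 - ρ n ^ 2) := by
  filter_upwards [hHR.eventually_const_lt (show 0 < lam ^ 2 by positivity),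
    logn_top.eventually_gt_atTop 0] with n h1 h2
  have h3 : 0 < 1 - ρ n := by
    by_contra hc
    nlinarith [not_lt.1 hc]
  have := (hρ n).1
  apply Real.sqrt_pos.2
  nlinarith

lemma prob_identity {Ω : Type*} [MeasurableSpace Ω] (μ : Measure Ω) [IsProbabilityMeasure μ]
    (X Y : Ω → ℝ) (hXm : Measurable X) (hYm : Measurable Y)
    (hXg : μ.map X = gaussianReal 0 1) (hYg : μ.map Y = gaussianReal 0 1)
    (hindep : IndepFun X Y μ) (u v r σ : ℝ) (hσ : 0 < σ) :
    (μ {ω | |X ω| ≤ u ∧ r * |X ω| + σ * Y ω ≤ v}).toReal =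
      1 - ∫ s, npdf |s| * (if |s| ≤ u then 1 - stdNormalCDF ((v - r * |s|) / σ) else 1) := by
  set S : Set (ℝ × ℝ) := {p | |p.1| ≤ u ∧ r * |p.1| + σ * p.2 ≤ v} with hS
  have hSm : MeasurableSet S := by
    have m1 : MeasurableSet {p : ℝ × ℝ | |p.1| ≤ u} :=
      measurableSet_le (measurable_fst.abs) measurable_const
    have m2 : MeasurableSet {p : ℝ × ℝ | r * |p.1| + σ * p.2 ≤ v} :=
      measurableSet_le ((measurable_fst.abs.const_mul r).add (measurable_snd.const_mul σ))
        measurable_const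
    exact m1.inter m2
  have hmap := (indepFun_iff_map_prod_eq_prod_map_map hXm.aemeasurable hYm.aemeasurable).1 hindep
  rw [hXg, hYg] at hmap
  have e1 : μ {ω | |X ω| ≤ u ∧ r * |X ω| + σ * Y ω ≤ v} =
      ((gaussianReal 0 1).prod (gaussianReal 0 1)) S := by
    rw [← hmap, Measure.map_apply (hXm.prodMk hYm) hSm]; rfl
  have hsec : ∀ s : ℝ, (gaussianReal 0 1).real (Prod.mk s ⁻¹' Sᶜ) =
      if |s| ≤ u then 1 - stdNormalCDF ((v - r * |s|) / σ) else 1 := by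
    intro s
    split_ifs with h
    · rw [← cdf_tail]; congr 1; ext y
      simp only [hS, mem_preimage, mem_compl_iff, mem_ofPred_eq, h, true_and, not_le, mem_Ioi]
      rw [div_lt_iff₀ hσ]
      constructor <;> intro h <;> linarith
    · have : (Prod.mk s ⁻¹' Sᶜ) = univ := by
        ext y; simp [hS, h]
      rw [this]; simp
  rw [e1]
  have e2 : (((gaussianReal 0 1).prod (gaussianReal 0 1)) S).toReal =
      1 - ((gaussianReal 0 1).prod (gaussianReal 0 1)).real Sᶜ := by
    rw [probReal_compl_eq_one_sub hSm, sub_sub_cancel]; rfl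
  rw [e2]
  congr 1
  rw [Measure.real, Measure.prod_apply hSm.compl]
  rw [← integral_toReal (measurable_measure_prodMk_left hSm.compl).aemeasurable
    (Eventually.of_forall fun s => measure_lt_top _ _)]
  change ∫ s, (gaussianReal 0 1).real (Prod.mk s ⁻¹' Sᶜ) ∂_ = _
  simp_rw [hsec]
  rw [integral_gaussianReal_eq_integral_smul one_ne_zero]
  refine integral_congr_ae (Eventually.of_forall fun s => ?_)
  simp only [npdf_eq, smul_eq_mul]
  congr 1
  simp [npdf]

lemma prob_identity2 {Ω : Type*} [MeasurableSpace Ω] (μ : Measure Ω) [IsProbabilityMeasure μ]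
    (X Y : Ω → ℝ) (hXm : Measurable X) (hYm : Measurable Y)
    (hXg : μ.map X = gaussianReal 0 1) (hYg : μ.map Y = gaussianReal 0 1)
    (hindep : IndepFun X Y μ) (a β x y r σ : ℝ) (ha : 0 < a) (hσ : 0 < σ) :
    (μ {ω | |X ω| ≤ β + a * x ∧ r * |X ω| + σ * Y ω ≤ β + a * y}).toReal =
      1 - ∫ t, (if 0 < β + a * t then 2 * a * npdf (β + a * t) *
        (if t ≤ x then 1 - stdNormalCDF ((β + a * y - r * (β + a * t)) / σ) else 1) else 0) := by
  rw [prob_identity μ X Y hXm hYm hXg hYg hindep _ _ _ _ hσ]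
  congr 1
  rw [integral_comp_abs (f := fun s => npdf s *
    (if s ≤ β + a * x then 1 - stdNormalCDF ((β + a * y - r * s) / σ) else 1))]
  rw [← integral_indicator measurableSet_Ioi, ← integral_const_mul]
  rw [← integral_add_left_eq_self _ β]
  have h := Measure.integral_comp_mul_left (fun s => 2 * (Ioi (0:ℝ)).indicator (fun s => npdf s *
    (if s ≤ β + a * x then 1 - stdNormalCDF ((β + a * y - r * s) / σ) else 1)) (β + s)) a
  rw [abs_of_pos (inv_pos.2 ha), smul_eq_mul, eq_inv_mul_iff_mul_eq₀ ha.ne'] at h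
  rw [← h, ← integral_const_mul]
  refine integral_congr_ae (Eventually.of_forall fun t => ?_)
  simp only [indicator, mem_Ioi, add_le_add_iff_left, mul_le_mul_iff_right₀ ha]
  split_ifs <;> ring

lemma bound_integrable (x C : ℝ) :
    Integrable (fun t : ℝ => 4 * (Real.exp (-(t + Real.log 2) / 2) + Real.exp (-2 * (t + Real.log 2))) *
      (if t ≤ x then C * Real.exp (-3 * (x - t)) else 1)) := by
  rw [← integrableOn_univ, ← Iic_union_Ioi (a := x)]
  refine IntegrableOn.union ?_ ?_
  · have h1 := (integrableOn_exp_mul_Iic (a := 5 / 2) (by norm_num) x).const_mul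
      (4 * C * Real.exp (-3 * x - Real.log 2 / 2))
    have h2 := (integrableOn_exp_mul_Iic (a := 1) (by norm_num) x).const_mul
      (4 * C * Real.exp (-3 * x - 2 * Real.log 2))
    refine IntegrableOn.congr_fun (h1.add h2) (fun t ht => ?_) measurableSet_Iic
    simp only [Pi.add_apply]
    rw [if_pos (show t ≤ x from ht)]
    rw [mul_assoc _ (Real.exp _) (Real.exp _), mul_assoc _ (Real.exp _) (Real.exp _),
      ← Real.exp_add, ← Real.exp_add]
    have : 4 * (Real.exp (-(t + Real.log 2) / 2) + Real.exp (-2 * (t + Real.log 2))) *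
      (C * Real.exp (-3 * (x - t))) = 4 * C * (Real.exp (-(t + Real.log 2) / 2) *
        Real.exp (-3 * (x - t))) + 4 * C * (Real.exp (-2 * (t + Real.log 2)) *
        Real.exp (-3 * (x - t))) := by ring
    rw [this, ← Real.exp_add, ← Real.exp_add]
    congr 3 <;> ring
  · have h1 := (integrableOn_exp_mul_Ioi (a := -1 / 2) (by norm_num) x).const_mul
      (4 * Real.exp (- Real.log 2 / 2))
    have h2 := (integrableOn_exp_mul_Ioi (a := -2) (by norm_num) x).const_mul
      (4 * Real.exp (- 2 * Real.log 2))
    refine IntegrableOn.congr_fun (h1.add h2) (fun t ht => ?_) measurableSet_Ioi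
    simp only [Pi.add_apply]
    rw [if_neg (not_le.2 (show x < t from ht)), mul_one, mul_add]
    rw [mul_assoc _ (Real.exp _) (Real.exp _), mul_assoc _ (Real.exp _) (Real.exp _),
      ← Real.exp_add, ← Real.exp_add]
    congr 3 <;> ring

lemma limit_total (lam : ℝ) (hlam : 0 < lam) (x y : ℝ) :
    ∫ t, Real.exp (-t) * (if t ≤ x then 1 - stdNormalCDF (lam + (y - t) / (2 * lam)) else 1) =
      stdNormalCDF (lam + (x - y) / (2 * lam)) * Real.exp (-y) +
          stdNormalCDF (lam + (y - x) / (2 * lam)) * Real.exp (-x) := by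
  set f : ℝ → ℝ := fun t =>
    Real.exp (-t) * (if t ≤ x then 1 - stdNormalCDF (lam + (y - t) / (2 * lam)) else 1) with hf
  have e1 : EqOn (fun t => Real.exp (-t) * (1 - stdNormalCDF (lam + (y - t) / (2 * lam)))) f (Iic x) := by
    intro t ht
    simp only [hf]; rw [if_pos (show t ≤ x from ht)]
  have e2 : EqOn (fun t => Real.exp (-t)) f (Ioi x) := by
    intro t ht
    simp only [hf]; rw [if_neg (not_le.2 (show x < t from ht)), mul_one]
  have i1 : IntegrableOn f (Iic x) := (limit_integrable lam hlam x y).congr_fun e1 measurableSet_Iic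
  have i2 : IntegrableOn f (Ioi x) := (integrableOn_exp_neg_Ioi x).congr_fun e2 measurableSet_Ioi
  rw [← setIntegral_univ, ← Iic_union_Ioi (a := x), setIntegral_union (Iic_disjoint_Ioi le_rfl)
    measurableSet_Ioi i1 i2, ← setIntegral_congr_fun measurableSet_Iic e1,
    ← setIntegral_congr_fun measurableSet_Ioi e2, limit_value lam hlam, integral_exp_neg_Ioi]
  ring

lemma main_lim (a b : ℕ → ℝ)
    (ha : ∀ n : ℕ, a n = 1 / Real.sqrt (2 * Real.log n))
    (hb : ∀ n : ℕ, 2 ≤ n → stdNormalCDF (b n) = 1 - 1 / (n : ℝ))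
    (ρ : ℕ → ℝ) (hρ : ∀ n, ρ n ∈ Ioc (0 : ℝ) 1)
    (lam : ℝ) (hlam : 0 < lam)
    (hHR : Tendsto (fun n : ℕ => (1 - ρ n) * Real.log n) atTop (𝓝 (lam ^ 2))) (x y : ℝ) :
    Tendsto (fun n : ℕ => ∫ t, (n : ℝ) * (if 0 < b n + a n * Real.log 2 + a n * t then
        2 * a n * npdf (b n + a n * Real.log 2 + a n * t) *
        (if t ≤ x then 1 - stdNormalCDF ((b n + a n * Real.log 2 + a n * y
          - ρ n * (b n + a n * Real.log 2 + a n * t)) / Real.sqrt (1 - ρ n ^ 2)) else 1) else 0))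
      atTop (𝓝 (stdNormalCDF (lam + (x - y) / (2 * lam)) * Real.exp (-y) +
          stdNormalCDF (lam + (y - x) / (2 * lam)) * Real.exp (-x))) := by
  have hA := A_lim a b ha hb ρ hρ lam hlam hHR
  have hB := B_lim a ha ρ hρ lam hlam hHR
  have hD := (rho_lim ρ _ hHR).mul hB
  rw [one_mul] at hD
  have hab := ab_lim a b ha hb
  have hc := c_lim a b ha hb
  have ha0 := a_lim a ha
  have hbt := b_top b hb
  have hap := a_pos a ha
  have harg : ∀ (n : ℕ) (t : ℝ), (b n + a n * Real.log 2 + a n * y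
          - ρ n * (b n + a n * Real.log 2 + a n * t)) / Real.sqrt (1 - ρ n ^ 2) =
      (b n + a n * Real.log 2) * (1 - ρ n) / Real.sqrt (1 - ρ n ^ 2)
        + a n / Real.sqrt (1 - ρ n ^ 2) * y - ρ n * (a n / Real.sqrt (1 - ρ n ^ 2)) * t := by
    intro n t; ring
  have hE : ∀ (n : ℕ) (t : ℝ), npdf (b n + a n * Real.log 2 + a n * t) =
      npdf (b n) * Real.exp (-(a n * b n * (t + Real.log 2)) - (a n * (t + Real.log 2)) ^ 2 / 2) := by
    intro n t
    rw [← npdf_shift]; congr 1; ring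
  rw [← limit_total lam hlam]
  obtain ⟨M, hM⟩ : ∃ M : ℝ, -M < lam + 1 / (2 * lam) * y - 1 / (2 * lam) * x :=
    ⟨-(lam + 1 / (2 * lam) * y - 1 / (2 * lam) * x) + 1, by linarith⟩
  have hM' := ((hA.add (hB.mul_const y)).sub (hD.mul_const x)).eventually_const_lt hM
  have hD' := hD.eventually_const_lt (show 1 / (4 * lam) < 1 / (2 * lam) by
    apply one_div_lt_one_div_of_lt <;> linarith)
  refine tendsto_integral_filter_of_dominated_convergence
    (fun t : ℝ => 4 * (Real.exp (-(t + Real.log 2) / 2) + Real.exp (-2 * (t + Real.log 2))) *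
      (if t ≤ x then Real.exp (72 * lam ^ 2 + 12 * lam * M) * Real.exp (-3 * (x - t)) else 1))
    ?_ ?_ (bound_integrable x _) ?_
  · refine Eventually.of_forall fun n => Measurable.aestronglyMeasurable ?_
    have m1 := cdf_cont.measurable
    have m2 := npdf_cont.measurable
    refine measurable_const.mul (Measurable.ite ?_ ?_ measurable_const)
    · exact measurableSet_lt (by fun_prop) (by fun_prop)
    · refine Measurable.mul (by fun_prop) (Measurable.ite measurableSet_Iic ?_ measurable_const)
      fun_prop
  · filter_upwards [hM', hD', hap, hc.eventually_lt_const (show (1:ℝ) < 2 by norm_num),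
      hab.eventually_lt_const (show (1:ℝ) < 2 by norm_num),
      hab.eventually_const_lt (show (1 / 2 :ℝ) < 1 by norm_num)] with n h1 h2 h3 h4 h5 h6
    refine Eventually.of_forall fun t => ?_
    set G : ℝ := (if t ≤ x then 1 - stdNormalCDF ((b n + a n * Real.log 2 + a n * y
          - ρ n * (b n + a n * Real.log 2 + a n * t)) / Real.sqrt (1 - ρ n ^ 2)) else 1) with hG
    have hG0 : 0 ≤ G := by
      rw [hG]; split_ifs
      · exact tail_nonneg _
      · exact zero_le_one
    have hG1 : G ≤ (if t ≤ x then Real.exp (72 * lam ^ 2 + 12 * lam * M) *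
        Real.exp (-3 * (x - t)) else 1) := by
      rw [hG]; split_ifs with htx
      · refine (chernoff (12 * lam) _ (by positivity)).trans ?_
        rw [← Real.exp_add]
        apply Real.exp_le_exp.2
        rw [harg]
        have k1 : -M + 1 / (4 * lam) * (x - t) ≤
          (b n + a n * Real.log 2) * (1 - ρ n) / Real.sqrt (1 - ρ n ^ 2)
            + a n / Real.sqrt (1 - ρ n ^ 2) * y - ρ n * (a n / Real.sqrt (1 - ρ n ^ 2)) * t := by
          have := mul_le_mul_of_nonneg_right h2.le (sub_nonneg.2 htx)
          linarith
        have k2 := mul_le_mul_of_nonneg_left k1 (show 0 ≤ 12 * lam by positivity)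
        have k3 : 12 * lam * (-M + 1 / (4 * lam) * (x - t)) = -(12 * lam * M) + 3 * (x - t) := by
          field_simp; ring
        nlinarith
      · exact le_rfl
    have hp := npdf_pos (b n)
    have hE1 : Real.exp (-(a n * b n * (t + Real.log 2)) - (a n * (t + Real.log 2)) ^ 2 / 2) ≤
        Real.exp (-(t + Real.log 2) / 2) + Real.exp (-2 * (t + Real.log 2)) := by
      rcases le_total 0 (t + Real.log 2) with hp | hp
      · refine le_trans (Real.exp_le_exp.2 ?_) (le_add_of_nonneg_right (Real.exp_pos _).le)
        nlinarith [sq_nonneg (a n * (t + Real.log 2))]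
      · refine le_trans (Real.exp_le_exp.2 ?_) (le_add_of_nonneg_left (Real.exp_pos _).le)
        nlinarith [sq_nonneg (a n * (t + Real.log 2))]
    have hB0 : 0 ≤ 4 * (Real.exp (-(t + Real.log 2) / 2) + Real.exp (-2 * (t + Real.log 2))) := by
      positivity
    by_cases hpos : 0 < b n + a n * Real.log 2 + a n * t
    · rw [if_pos hpos, hE]
      rw [Real.norm_of_nonneg (by positivity)]
      have e : (n:ℝ) * (2 * a n * (npdf (b n) * Real.exp (-(a n * b n * (t + Real.log 2)) - (a n * (t + Real.log 2)) ^ 2 / 2)) * G)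
        = (2 * (n * a n * npdf (b n)) * Real.exp (-(a n * b n * (t + Real.log 2)) - (a n * (t + Real.log 2)) ^ 2 / 2)) * G := by ring
      rw [e]
      refine mul_le_mul ?_ hG1 hG0 hB0
      refine mul_le_mul (by linarith) hE1 (Real.exp_pos _).le (by norm_num)
    · rw [if_neg hpos, mul_zero, norm_zero]
      exact mul_nonneg hB0 (hG0.trans hG1)
  · refine Eventually.of_forall fun t => ?_
    have hpos : ∀ᶠ n in atTop, 0 < b n + a n * Real.log 2 + a n * t := by
      have : Tendsto (fun n => b n + (a n * Real.log 2 + a n * t)) atTop atTop :=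
        hbt.atTop_add ((ha0.mul_const _).add (ha0.mul_const _))
      filter_upwards [this.eventually_gt_atTop 0] with n hn
      linarith
    have hw : Tendsto (fun n : ℕ => 2 * (n * a n * npdf (b n)) *
        Real.exp (-(a n * b n * (t + Real.log 2)) - (a n * (t + Real.log 2)) ^ 2 / 2))
        atTop (𝓝 (Real.exp (-t))) := by
      have h1 := ((hab.mul_const (t + Real.log 2)).neg.sub
        (((ha0.mul_const (t + Real.log 2)).pow 2).div_const 2))
      have h2 := (hc.const_mul 2).mul ((Real.continuous_exp.tendsto _).comp h1)
      have e : 2 * 1 * Real.exp (-(1 * (t + Real.log 2)) - (0 * (t + Real.log 2)) ^ 2 / 2) =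
          Real.exp (-t) := by
        rw [show -(1 * (t + Real.log 2)) - (0 * (t + Real.log 2)) ^ 2 / 2 = -t - Real.log 2 by ring,
          Real.exp_sub, Real.exp_log two_pos]
        ring
      rw [e] at h2
      exact h2
    have hG : Tendsto (fun n => (if t ≤ x then 1 - stdNormalCDF ((b n + a n * Real.log 2 + a n * y
          - ρ n * (b n + a n * Real.log 2 + a n * t)) / Real.sqrt (1 - ρ n ^ 2)) else 1)) atTop
        (𝓝 (if t ≤ x then 1 - stdNormalCDF (lam + (y - t) / (2 * lam)) else 1)) := by
      split_ifs
      · simp_rw [harg]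
        have h1 := (hA.add (hB.mul_const y)).sub (hD.mul_const t)
        rw [show lam + 1 / (2 * lam) * y - 1 / (2 * lam) * t = lam + (y - t) / (2 * lam) by ring] at h1
        exact ((cdf_cont.tendsto _).comp h1).const_sub 1
      · exact tendsto_const_nhds
    refine (hw.mul hG).congr' ?_
    filter_upwards [hpos] with n hn
    rw [if_pos hn, hE]
    ring


theorem gaussian_skew_maxima_HuslerReiss
{Ω : Type*} [MeasurableSpace Ω] (μ : Measure Ω) [IsProbabilityMeasure μ]
    (X Y : Ω → ℝ) (hXm : Measurable X) (hYm : Measurable Y)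
    (hXg : μ.map X = gaussianReal 0 1) (hYg : μ.map Y = gaussianReal 0 1)
    (hindep : IndepFun X Y μ)
    (a b : ℕ → ℝ)
    (ha : ∀ n : ℕ, a n = 1 / Real.sqrt (2 * Real.log n))
    (hb : ∀ n : ℕ, 2 ≤ n → stdNormalCDF (b n) = 1 - 1 / (n : ℝ))
    (ρ : ℕ → ℝ) (hρ : ∀ n, ρ n ∈ Ioc (0 : ℝ) 1)
    (lam : ℝ) (hlam : 0 < lam)
    (hHR : Tendsto (fun n : ℕ => (1 - ρ n) * Real.log n) atTop (𝓝 (lam ^ 2))) :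
    ∀ x y : ℝ,
      Tendsto (fun n : ℕ =>
          ((μ {ω | |X ω| ≤ a n * x + b n + a n * Real.log 2 ∧
            ρ n * |X ω| + Real.sqrt (1 - ρ n ^ 2) * Y ω ≤
              a n * y + b n + a n * Real.log 2}).toReal) ^ n)
        atTop (𝓝 (Real.exp (-(stdNormalCDF (lam + (x - y) / (2 * lam)) * Real.exp (-y) +
          stdNormalCDF (lam + (y - x) / (2 * lam)) * Real.exp (-x))))) := by
  intro x y
  have hm := main_lim a b ha hb ρ hρ lam hlam hHR x y
  refine (Real.tendsto_one_add_pow_exp_of_tendsto (g := fun n =>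
    -∫ t, (if 0 < b n + a n * Real.log 2 + a n * t then
        2 * a n * npdf (b n + a n * Real.log 2 + a n * t) *
        (if t ≤ x then 1 - stdNormalCDF ((b n + a n * Real.log 2 + a n * y
          - ρ n * (b n + a n * Real.log 2 + a n * t)) / Real.sqrt (1 - ρ n ^ 2)) else 1) else 0))
    ?_).congr' ?_
  · refine hm.neg.congr fun n => ?_
    rw [integral_const_mul]; ring
  · filter_upwards [a_pos a ha, sigma_pos ρ hρ lam hlam hHR] with n h1 h2
    congr 1
    have h := prob_identity2 μ X Y hXm hYm hXg hYg hindep (a n) (b n + a n * Real.log 2) x y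
      (ρ n) _ h1 h2
    rw [← sub_eq_add_neg, ← h]
    congr 3
    ext ω
    rw [show b n + a n * Real.log 2 + a n * x = a n * x + b n + a n * Real.log 2 by ring,
      show b n + a n * Real.log 2 + a n * y = a n * y + b n + a n * Real.log 2 by ring]
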